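/- Let p be a prime with p ≠ 2 and p ≠ 5, let a and n be positive integers with a odd, let r = p^a n mod z(p), s = n mod z(p), and A = ⌊n(p^a − 1)/(p^{ν_p(n)}·z(p))⌋. If p ≡ ±2 (mod 5), then ν_p( C(p^a n, n)_F ) = ⌊A/(p−1)⌋ − ((a−1)/2)·[s ≠ 0] − ν_p(A!) + δ, where δ = 0 if r = s, δ = ⌊ν_p(n)/2⌋ + ν_p(F_{z(p)}) if r < s, and δ = ⌈ν_p(n)/2⌉ if r > s. -/

import Mathlib

/-!
Write `z` for the rank of appearance of `p` and `e` for the valuation of `F z`.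

Since `p ≡ ±2 (mod 5)`, the number `5` is a quadratic nonresidue modulo `p`, and the Frobenius
congruence for `(1 + √5) ^ p` in `ℤ[√5]` gives `p ∣ F (p + 1)`. Hence `z ∣ p + 1`, that is,
`p ≡ -1 (mod z)`. A lifting-the-exponent argument gives `ν_p (F (z * k)) = e + ν_p k`, so that
`ν_p (F 1 ⋯ F m) = e * ⌊m / z⌋ + ν_p (⌊m / z⌋ !)` (`padicValNat_fibonorial`).

Apply this to the three Fibonorials in the Fibonomial coefficient. The multiples of `e` contribute
`e * [r < s]`, the carry in the addition of `n` and `p ^ a * n - n` modulo `z`. For the factorials,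
Legendre's formula in the form
`ν_p (⌊p ^ k * X / z⌋ !) = ∑_{i < k} ⌊p ^ i * X / z⌋ + ν_p (⌊X / z⌋ !)`
is used with `(k, X) = (a, n)` and with `(k, X) = (ν, M)`, where `ν = ν_p n`, `n = p ^ ν * n'` and
`M = n' * (p ^ a - 1)`; in the second case `⌊M / z⌋ = A`. Because `p ≡ -1 (mod z)`, the residues of
`p ^ i * X` modulo `z` alternate between `X mod z` and its negative, so these sums of floors have
the closed form `sum_pow_mul_div`. The same closed form shows that `⌊A / (p - 1)⌋` is the quotient
of `n' * (1 + p + ⋯ + p ^ (a - 1))` by `z`, with remainder `n' mod z`. What remains is the identity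
`residue_identity` between the residues of `n`, `n'`, `p ^ a * n` and `M`, which produces the
terms `⌊ν / 2⌋` and `⌈ν / 2⌉`.
-/

/-- The Fibonomial coefficient `C(m,k)_F = (F_{m-k+1} ⋯ F_m)/(F_1 ⋯ F_k)`,
with `C(m,0)_F = 1` and `C(m,k)_F = 0` for `k > m`. -/
def fibBinom (m k : ℕ) : ℕ :=
  (∏ i ∈ Finset.range k, Nat.fib (m - i)) / ∏ i ∈ Finset.range k, Nat.fib (i + 1)

/-- The rank of appearance `z(n)`: the least positive `m` with `n ∣ F_m`. -/
noncomputable def fibRank (n : ℕ) : ℕ := sInf {m : ℕ | 0 < m ∧ n ∣ Nat.fib m}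

/-- The sum of the digits of `n` in base `q`. -/
def digitSum (q n : ℕ) : ℕ := (Nat.digits q n).sum

/-! ### The rank of appearance divides `p + 1` -/

/-- If `5` is a nonresidue modulo `p`, then `(1 + √5) ^ p ≡ 1 + 5 ^ ((p - 1) / 2) * √5 ≡ 1 - √5`
modulo `p`, so `(1 + √5) ^ (p + 1)` has `√5`-coordinate divisible by `p`; twice that coordinate is
`2 ^ (p + 1) * F (p + 1)`. -/
theorem dvd_fib_succ (p : ℕ) (hp : p.Prime) (hp2 : p ≠ 2)
    (hmod : p % 5 = 2 ∨ p % 5 = 3) : p ∣ Nat.fib (p + 1) := by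
  have h2 : ¬ IsSquare ((2 : ℕ) : ZMod 5) := by decide
  have h3 : ¬ IsSquare ((3 : ℕ) : ZMod 5) := by decide
  have := Fact.mk hp
  have : Fact (Nat.Prime 5) := ⟨by norm_num⟩
  have hodd : p % 2 = 1 := hp.eq_two_or_odd.resolve_left hp2
  have hns : ¬ IsSquare ((5 : ℕ) : ZMod p) := by
    -- Quadratic reciprocity for the pair `5`, `p`.
    rw [← ZMod.exists_sq_eq_prime_iff_of_mod_four_eq_one (p := 5) (q := p) (by norm_num) hp2]
    rw [← ZMod.natCast_mod]
    rcases hmod with h | h <;> rw [h]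
    exacts [h2, h3]
  have h50 : ((5 : ℕ) : ZMod p) ≠ 0 := fun h => hns (h ▸ IsSquare.zero)
  have heul : ((5 : ℕ) : ZMod p) ^ (p / 2) = -1 :=
    (ZMod.pow_div_two_eq_neg_one_or_one p h50).resolve_left
      fun h => hns ((ZMod.euler_criterion p h50).2 h)
  have hdvd5 : (p : ℤ) ∣ 5 ^ (p / 2) + 1 := by
    rw [← ZMod.intCast_zmod_eq_zero_iff_dvd]
    push_cast at heul ⊢
    rw [heul]; ring
  have hpow : ∀ n : ℕ, 2 * ((⟨1, 1⟩ : ℤ√5) ^ n).re = 2 ^ n * (2 * Nat.fib (n + 1) - Nat.fib n) ∧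
      2 * ((⟨1, 1⟩ : ℤ√5) ^ n).im = 2 ^ n * Nat.fib n := by
    intro n
    induction n with
    | zero => simp
    | succ n ih =>
      rw [pow_succ, Zsqrtd.re_mul, Zsqrtd.im_mul, Nat.fib_add_two (n := n)]
      push_cast
      constructor
      · linear_combination ih.1 + 5 * ih.2
      · linear_combination ih.1 + ih.2
  have hsq : ∀ k : ℕ, (Zsqrtd.sqrtd : ℤ√5) ^ (2 * k + 1) = ⟨0, 5 ^ k⟩ := by
    intro k
    induction k with
    | zero => ext <;> simp
    | succ k ih =>
      rw [show 2 * (k + 1) + 1 = (2 * k + 1) + 2 by ring, pow_add, ih, pow_two]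
      ext <;> simp [pow_succ]
  have hfr : (p : ℤ) ∣ ((⟨1, 1⟩ : ℤ√5) ^ p).re - 1 ∧
      (p : ℤ) ∣ ((⟨1, 1⟩ : ℤ√5) ^ p).im - 5 ^ (p / 2) := by
    obtain ⟨c, hc⟩ := exists_add_pow_prime_eq hp (1 : ℤ√5) Zsqrtd.sqrtd
    have h1 : (1 : ℤ√5) + Zsqrtd.sqrtd = ⟨1, 1⟩ := by ext <;> simp
    have h2 := hsq (p / 2)
    rw [show 2 * (p / 2) + 1 = p by omega] at h2
    rw [h1, h2] at hc
    rw [hc]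
    constructor
    · refine ⟨(Zsqrtd.sqrtd * c : ℤ√5).re, ?_⟩
      simp [mul_assoc]
    · refine ⟨(Zsqrtd.sqrtd * c : ℤ√5).im, ?_⟩
      simp [mul_assoc]
  have h2p := (hpow (p + 1)).2
  rw [pow_succ, Zsqrtd.im_mul] at h2p
  have hd : (p : ℤ) ∣ 2 ^ (p + 1) * (Nat.fib (p + 1) : ℤ) := by
    rw [← h2p]
    have := dvd_add (dvd_add hfr.1 hfr.2) hdvd5
    refine Dvd.dvd.mul_left ?_ 2
    convert this using 1
    ring
  have hd' : p ∣ 2 ^ (p + 1) * Nat.fib (p + 1) := by exact_mod_cast hd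
  refine (Nat.Coprime.dvd_of_dvd_mul_left ?_ hd')
  exact Nat.Coprime.pow_right _ ((Nat.coprime_primes hp Nat.prime_two).2 hp2)

/-- Once `p` divides some `F N` with `N > 0`, the infimum defining `fibRank p` is attained, and
it generates the set of indices `m` with `p ∣ F m`. -/
theorem fibRank_spec {p N : ℕ} (hN : 0 < N) (h : p ∣ Nat.fib N) :
    0 < fibRank p ∧ p ∣ Nat.fib (fibRank p) ∧ ∀ m, p ∣ Nat.fib m ↔ fibRank p ∣ m := by
  have hmem : fibRank p ∈ {m : ℕ | 0 < m ∧ p ∣ Nat.fib m} := Nat.sInf_mem ⟨N, hN, h⟩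
  refine ⟨hmem.1, hmem.2, fun m => ⟨fun hm => ?_, fun hm => hmem.2.trans (Nat.fib_dvd _ _ hm)⟩⟩
  have hg : p ∣ Nat.fib (Nat.gcd (fibRank p) m) := by
    rw [Nat.fib_gcd]; exact Nat.dvd_gcd hmem.2 hm
  have hle : fibRank p ≤ Nat.gcd (fibRank p) m :=
    Nat.sInf_le ⟨Nat.gcd_pos_of_pos_left _ hmem.1, hg⟩
  exact Nat.gcd_eq_left_iff_dvd.1 (le_antisymm (Nat.gcd_le_left _ hmem.1) hle)

/-! ### Lifting the exponent -/

/-- Binomial-type expansion of `F ((m + 1) * k)` modulo `F (m + 1) ^ 3`, and of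
`F ((m + 1) * k + 1)` modulo `F (m + 1) ^ 2`. The factor `F m ^ 2`, coprime to `F (m + 1)`,
avoids the exponents `k - 1` and `k - 2`. -/
theorem fib_mul_expansion (m k : ℕ) : ∃ c d : ℤ,
    (Nat.fib m : ℤ) ^ 2 * Nat.fib ((m + 1) * k) =
        k * Nat.fib (m + 1) * (Nat.fib m : ℤ) ^ (k + 1)
          + k.choose 2 * (Nat.fib (m + 1) : ℤ) ^ 2 * (Nat.fib m : ℤ) ^ k
          + (Nat.fib (m + 1) : ℤ) ^ 3 * c ∧
    (Nat.fib m : ℤ) ^ 2 * Nat.fib ((m + 1) * k + 1) =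
        (Nat.fib m : ℤ) ^ (k + 2) + k * Nat.fib (m + 1) * (Nat.fib m : ℤ) ^ (k + 1)
          + (Nat.fib (m + 1) : ℤ) ^ 2 * d := by
  induction k with
  | zero => exact ⟨0, 0, by simp, by simp⟩
  | succ k ih =>
    obtain ⟨c, d, h1, h2⟩ := ih
    have e1 : (Nat.fib ((m + 1) * (k + 1)) : ℤ) =
        Nat.fib ((m + 1) * k) * Nat.fib m + Nat.fib ((m + 1) * k + 1) * Nat.fib (m + 1) := by
      have := Nat.fib_add ((m + 1) * k) m
      rw [show (m + 1) * (k + 1) = (m + 1) * k + m + 1 by ring, this]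
      push_cast; ring
    have e2 : (Nat.fib ((m + 1) * (k + 1) + 1) : ℤ) =
        Nat.fib ((m + 1) * k) * Nat.fib (m + 1)
          + Nat.fib ((m + 1) * k + 1) * (Nat.fib m + Nat.fib (m + 1)) := by
      have := Nat.fib_add ((m + 1) * k) (m + 1)
      rw [show (m + 1) * (k + 1) + 1 = (m + 1) * k + (m + 1) + 1 by ring, this,
        Nat.fib_add_two (n := m)]
      push_cast; ring
    set H : ℤ := (Nat.fib m : ℤ)
    set x : ℤ := (Nat.fib (m + 1) : ℤ)
    rw [e1, e2, Nat.choose_succ_succ' k 1, Nat.choose_one_right]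
    refine ⟨c * H + d, 2 * k * H ^ (k + 1) + k.choose 2 * x * H ^ k + x ^ 2 * c + d * (H + x),
      ?_, ?_⟩
    · push_cast
      linear_combination H * h1 + x * h2
    · push_cast
      linear_combination x * h1 + (H + x) * h2

theorem padicValNat_fib_mul_prime {p m : ℕ} (hp : p.Prime) (hp2 : p ≠ 2)
    (h : p ∣ Nat.fib (m + 1)) :
    padicValNat p (Nat.fib ((m + 1) * p)) = padicValNat p (Nat.fib (m + 1)) + 1 := by
  have := Fact.mk hp
  have hx0 : Nat.fib (m + 1) ≠ 0 := (Nat.fib_pos.2 m.succ_pos).ne'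
  have hy0 : Nat.fib ((m + 1) * p) ≠ 0 := (Nat.fib_pos.2 (Nat.mul_pos m.succ_pos hp.pos)).ne'
  obtain ⟨c, d, h1, -⟩ := fib_mul_expansion m p
  have hcop : ¬ p ∣ Nat.fib m := fun hH =>
    hp.one_lt.ne' (Nat.dvd_one.1 ((Nat.fib_coprime_fib_succ m) ▸ Nat.dvd_gcd hH h))
  obtain ⟨y, hy⟩ := h
  obtain ⟨w, hw⟩ : p ∣ p.choose 2 :=
    hp.dvd_choose_self (by norm_num) (lt_of_le_of_ne hp.two_le (Ne.symm hp2))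
  -- As `p` is odd, it divides `p.choose 2`, so `F ((m + 1) * p) / (p * F (m + 1))` is prime to `p`.
  have key : (Nat.fib m : ℤ) ^ 2 * Nat.fib ((m + 1) * p) =
      (p * Nat.fib (m + 1)) * ((Nat.fib m : ℤ) ^ (p + 1)
        + p * (w * y * (Nat.fib m : ℤ) ^ p + y ^ 2 * c)) := by
    rw [h1, hw, hy]; push_cast; ring
  have hz : ∀ u : ℤ, ¬ (p : ℤ) ∣ (Nat.fib m : ℤ) ^ (p + 1) + p * u := by
    intro u hu
    have h2 := (Int.dvd_add_left (Dvd.intro u rfl)).1 hu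
    exact hcop (hp.dvd_of_dvd_pow (by exact_mod_cast h2))
  set U := (Nat.fib m : ℤ) ^ (p + 1) + p * (w * y * (Nat.fib m : ℤ) ^ p + y ^ 2 * c) with hU
  have hUn : ¬ p ∣ U.natAbs := fun hu => hz _ (Int.natCast_dvd.2 hu)
  have hU0 : U.natAbs ≠ 0 := fun h0 => hUn (h0 ▸ dvd_zero p)
  have hH0 : Nat.fib m ≠ 0 := fun h0 => hcop (h0 ▸ dvd_zero p)
  have hnat : Nat.fib m ^ 2 * Nat.fib ((m + 1) * p) = (p * Nat.fib (m + 1)) * U.natAbs := by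
    have := congrArg Int.natAbs key
    simpa [Int.natAbs_mul, Int.natAbs_pow] using this
  have hv := congrArg (padicValNat p) hnat
  rw [padicValNat.mul (pow_ne_zero 2 hH0) hy0, padicValNat.pow,
    padicValNat.mul (mul_ne_zero hp.ne_zero hx0) hU0, padicValNat.mul hp.ne_zero hx0,
    padicValNat.eq_zero_of_not_dvd hcop, padicValNat.eq_zero_of_not_dvd hUn,
    padicValNat_self] at hv
  omega

theorem padicValNat_fib_mul_of_not_dvd {p m k : ℕ} (hp : p.Prime) (hk : ¬ p ∣ k)
    (h : p ∣ Nat.fib (m + 1)) :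
    padicValNat p (Nat.fib ((m + 1) * k)) = padicValNat p (Nat.fib (m + 1)) := by
  have := Fact.mk hp
  have hk0 : k ≠ 0 := fun h0 => hk (h0 ▸ dvd_zero p)
  have hx0 : Nat.fib (m + 1) ≠ 0 := (Nat.fib_pos.2 m.succ_pos).ne'
  have hy0 : Nat.fib ((m + 1) * k) ≠ 0 :=
    (Nat.fib_pos.2 (Nat.mul_pos m.succ_pos (Nat.pos_of_ne_zero hk0))).ne'
  obtain ⟨c, d, h1, -⟩ := fib_mul_expansion m k
  have hcop : ¬ p ∣ Nat.fib m := fun hH =>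
    hp.one_lt.ne' (Nat.dvd_one.1 ((Nat.fib_coprime_fib_succ m) ▸ Nat.dvd_gcd hH h))
  obtain ⟨y, hy⟩ := h
  set U := k * (Nat.fib m : ℤ) ^ (k + 1) + p * (k.choose 2 * y * (Nat.fib m : ℤ) ^ k
    + Nat.fib (m + 1) * y * c) with hU
  have key : (Nat.fib m : ℤ) ^ 2 * Nat.fib ((m + 1) * k) = Nat.fib (m + 1) * U := by
    rw [h1, hU, hy]; push_cast; ring
  have hUn : ¬ p ∣ U.natAbs := by
    intro hu
    have h2 := (Int.dvd_add_left (Dvd.intro _ rfl)).1 (Int.natCast_dvd.2 hu)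
    have h3 : p ∣ k * Nat.fib m ^ (k + 1) := by exact_mod_cast h2
    exact (hp.dvd_mul.1 h3).elim hk fun h => hcop (hp.dvd_of_dvd_pow h)
  have hU0 : U.natAbs ≠ 0 := fun h0 => hUn (h0 ▸ dvd_zero p)
  have hH0 : Nat.fib m ≠ 0 := fun h0 => hcop (h0 ▸ dvd_zero p)
  have hnat : Nat.fib m ^ 2 * Nat.fib ((m + 1) * k) = Nat.fib (m + 1) * U.natAbs := by
    have := congrArg Int.natAbs key
    simpa [Int.natAbs_mul, Int.natAbs_pow] using this
  have hv := congrArg (padicValNat p) hnat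
  rw [padicValNat.mul (pow_ne_zero 2 hH0) hy0, padicValNat.pow,
    padicValNat.mul hx0 hU0, padicValNat.eq_zero_of_not_dvd hcop,
    padicValNat.eq_zero_of_not_dvd hUn] at hv
  omega

theorem padicValNat_fib_mul {p z k : ℕ} (hp : p.Prime) (hp2 : p ≠ 2) (hz : 0 < z)
    (h : p ∣ Nat.fib z) (hk : 0 < k) :
    padicValNat p (Nat.fib (z * k)) = padicValNat p (Nat.fib z) + padicValNat p k := by
  have := Fact.mk hp
  induction k using Nat.strong_induction_on with
  | _ k ih =>
    by_cases hpk : p ∣ k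
    · obtain ⟨j, rfl⟩ := hpk
      have hj : 0 < j := Nat.pos_of_mul_pos_left hk
      have hlt : j < p * j := lt_mul_of_one_lt_left hj hp.one_lt
      obtain ⟨m, hm⟩ := Nat.exists_eq_succ_of_ne_zero (Nat.mul_pos hz hj).ne'
      have h1 := padicValNat_fib_mul_prime (m := m) hp hp2
        (by rw [← Nat.succ_eq_add_one, ← hm]; exact h.trans (Nat.fib_dvd _ _ (dvd_mul_right _ _)))
      rw [← Nat.succ_eq_add_one, ← hm, ih j hlt hj] at h1
      rw [show z * (p * j) = z * j * p by ring, h1, padicValNat.mul hp.ne_zero hj.ne',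
        padicValNat_self]
      ring
    · obtain ⟨m, rfl⟩ := Nat.exists_eq_succ_of_ne_zero hz.ne'
      rw [padicValNat.eq_zero_of_not_dvd hpk, add_zero]
      exact padicValNat_fib_mul_of_not_dvd hp hpk h

/-! ### Valuations of Fibonorials and Fibonomial coefficients -/

/-- The Fibonorial `F 1 * F 2 * ⋯ * F m`. -/
def fibonorial (m : ℕ) : ℕ := ∏ i ∈ Finset.range m, Nat.fib (i + 1)

theorem fibonorial_ne_zero (m : ℕ) : fibonorial m ≠ 0 :=
  Finset.prod_ne_zero_iff.2 fun i _ => (Nat.fib_pos.2 i.succ_pos).ne'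

theorem fibonorial_succ (m : ℕ) : fibonorial (m + 1) = fibonorial m * Nat.fib (m + 1) :=
  Finset.prod_range_succ _ _

theorem padicValNat_fibonorial {p z : ℕ} (hp : p.Prime) (hp2 : p ≠ 2) (hz : 0 < z)
    (h : ∀ m, p ∣ Nat.fib m ↔ z ∣ m) (m : ℕ) :
    padicValNat p (fibonorial m) =
      padicValNat p (Nat.fib z) * (m / z) + padicValNat p (Nat.factorial (m / z)) := by
  have := Fact.mk hp
  induction m with
  | zero => simp [fibonorial]
  | succ m ih =>
    have hF : Nat.fib (m + 1) ≠ 0 := (Nat.fib_pos.2 m.succ_pos).ne'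
    rw [fibonorial_succ, padicValNat.mul (fibonorial_ne_zero m) hF, ih, Nat.succ_div]
    split_ifs with hd
    · have hk : m + 1 = z * (m / z + 1) := by
        have := Nat.mul_div_cancel' hd
        rw [Nat.succ_div, if_pos hd] at this
        exact this.symm
      rw [hk, padicValNat_fib_mul hp hp2 hz ((h z).2 dvd_rfl) (Nat.succ_pos _),
        Nat.factorial_succ, padicValNat.mul (Nat.succ_ne_zero _) (Nat.factorial_ne_zero _)]
      ring
    · rw [padicValNat.eq_zero_of_not_dvd (mt (h _).1 hd)]
      simp

/-- Integrality of the Fibonomial coefficients, from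
`F (a + b) = F (a - 1) * F b + F a * F (b + 1)`. -/
theorem fibonorial_mul_dvd (a b : ℕ) : fibonorial a * fibonorial b ∣ fibonorial (a + b) := by
  induction hN : a + b generalizing a b with
  | zero => obtain ⟨rfl, rfl⟩ := Nat.add_eq_zero_iff.1 hN; simp [fibonorial]
  | succ N ih =>
    rcases a with _ | a
    · simp [fibonorial, ← hN]
    rcases b with _ | b
    · simp [fibonorial, ← hN]
    have h1 := ih a (b + 1) (by omega)
    have h2 := ih (a + 1) b (by omega)
    rw [fibonorial_succ N, show N + 1 = a + (b + 1) + 1 by omega, Nat.fib_add, mul_add]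
    refine dvd_add ?_ ?_
    · rw [fibonorial_succ b]
      convert mul_dvd_mul h2 (dvd_mul_left (Nat.fib (b + 1)) (Nat.fib a)) using 1
      ring
    · rw [fibonorial_succ a]
      convert mul_dvd_mul h1 (dvd_mul_right (Nat.fib (a + 1)) (Nat.fib (b + 1 + 1))) using 1
      ring

/-- The natural-number division in `fibBinom` is exact. -/
theorem fibBinom_mul (m k : ℕ) :
    fibBinom (m + k) k * (fibonorial m * fibonorial k) = fibonorial (m + k) := by
  have h1 : (∏ i ∈ Finset.range k, Nat.fib (m + k - i)) * fibonorial m = fibonorial (m + k) := by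
    unfold fibonorial
    rw [Finset.prod_range_add, mul_comm,
      ← Finset.prod_range_reflect (fun i => Nat.fib (m + i + 1)) k]
    congr 1
    refine Finset.prod_congr rfl fun i hi => ?_
    have := Finset.mem_range.1 hi
    congr 1
    omega
  have h2 : fibonorial k ∣ ∏ i ∈ Finset.range k, Nat.fib (m + k - i) := by
    have := fibonorial_mul_dvd m k
    rw [← h1, mul_comm] at this
    exact Nat.dvd_of_mul_dvd_mul_right (Nat.pos_of_ne_zero (fibonorial_ne_zero m)) this
  change (∏ i ∈ Finset.range k, Nat.fib (m + k - i)) / fibonorial k * _ = _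
  rw [mul_comm (fibonorial m), ← mul_assoc, Nat.div_mul_cancel h2, h1]

/-! ### Sums of floors when `p ≡ -1 (mod z)` -/

/-- Legendre's formula iterated `k` times, using `⌊⌊p ^ (i + 1) * X / z⌋ / p⌋ = ⌊p ^ i * X / z⌋`. -/
theorem padicValNat_factorial_pow_mul_div {p : ℕ} (hp : p.Prime) (z X k : ℕ) :
    padicValNat p (Nat.factorial (p ^ k * X / z)) =
      ∑ i ∈ Finset.range k, p ^ i * X / z + padicValNat p (Nat.factorial (X / z)) := by
  have := Fact.mk hp
  induction k with
  | zero => simp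
  | succ k ih =>
    have h1 : p ^ (k + 1) * X / z / p = p ^ k * X / z := by
      rw [Nat.div_div_eq_div_mul, mul_comm z p, pow_succ', mul_assoc,
        Nat.mul_div_mul_left _ _ hp.pos]
    rw [← padicValNat_mul_div_factorial, padicValNat_factorial_mul, h1, ih,
      Finset.sum_range_succ]
    ring

theorem mul_mod_of_dvd_succ {p z : ℕ} (hz : 0 < z) (hzp : z ∣ p + 1) (X : ℕ) :
    p * X % z = if X % z = 0 then 0 else z - X % z := by
  have h1 : z ∣ p * X % z + X % z := by
    rw [Nat.dvd_iff_mod_eq_zero, ← Nat.add_mod, ← Nat.dvd_iff_mod_eq_zero,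
      show p * X + X = (p + 1) * X by ring]
    exact hzp.mul_right X
  have h2 := Nat.mod_lt (p * X) hz
  have h3 := Nat.mod_lt X hz
  obtain ⟨c, hc⟩ := h1
  have hc2 : c < 2 := by
    by_contra hcon
    have := Nat.mul_le_mul_left z (not_lt.1 hcon)
    omega
  interval_cases c <;> split_ifs <;> omega

theorem pow_mul_mod_of_dvd_succ {p z : ℕ} (hz : 0 < z) (hzp : z ∣ p + 1) (X k : ℕ) :
    p ^ k * X % z = if Even k then X % z else if X % z = 0 then 0 else z - X % z := by
  induction k with
  | zero => simp
  | succ k ih =>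
    have := Nat.mod_lt X hz
    rw [pow_succ', mul_assoc, mul_mod_of_dvd_succ hz hzp, ih]
    by_cases hk : Even k <;> simp only [hk, Nat.even_add_one, not_true, not_false_eq_true,
      if_true, if_false]
    all_goals split_ifs <;> omega

/-- Closed form of `∑_{i < k} ⌊p ^ i * X / z⌋`: two consecutive residues of `p ^ i * X` modulo `z`
add up to `z`, or to `0` if `z ∣ X`, and an unpaired last one equals `X % z`. -/
theorem sum_pow_mul_div {p z : ℕ} (hz : 0 < z) (hzp : z ∣ p + 1) (X k : ℕ) :
    z * ∑ i ∈ Finset.range k, p ^ i * X / z + z * (k / 2 * (if X % z = 0 then 0 else 1))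
      + (k % 2) * (X % z) = X * ∑ i ∈ Finset.range k, p ^ i := by
  induction k with
  | zero => simp
  | succ k ih =>
    have h1 := Nat.div_add_mod (p ^ k * X) z
    rw [pow_mul_mod_of_dvd_succ hz hzp] at h1
    have hlt := Nat.mod_lt X hz
    rw [Finset.sum_range_succ, Finset.sum_range_succ, mul_add, mul_add, ← ih, mul_comm X (p ^ k)]
    generalize p ^ k * X / z = Q at h1 ⊢
    rw [← h1]
    generalize ∑ i ∈ Finset.range k, p ^ i * X / z = S
    rcases Nat.even_or_odd' k with ⟨j, rfl | rfl⟩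
    · rw [show (2 * j + 1) / 2 = j by omega, show (2 * j) / 2 = j by omega,
        show (2 * j + 1) % 2 = 1 by omega, show (2 * j) % 2 = 0 by omega]
      simp only [even_two_mul, if_true]
      ring
    · rw [show (2 * j + 1 + 1) / 2 = j + 1 by omega, show (2 * j + 1) / 2 = j by omega,
        show (2 * j + 1 + 1) % 2 = 0 by omega, show (2 * j + 1) % 2 = 1 by omega]
      have : ¬ Even (2 * j + 1) := by simp
      simp only [this, if_false]
      split_ifs with h0
      · rw [h0]; ring
      · zify [hlt.le]; ring

/-- Here `s'`, `s`, `r`, `t` stand for the residues modulo `z` of `n'`, `p ^ v * n'`,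
`p ^ (a + v) * n'` and `n' * (p ^ a - 1)` with `a` odd and `p ≡ -1 (mod z)`; in particular
`t ≡ -2 * s'`, and `t = 0` exactly when `r = s`. -/
theorem residue_identity {z v s s' r t : ℕ} (hs' : s' < z) (ht : t < z)
    (hs : s = if Even v then s' else if s' = 0 then 0 else z - s')
    (hr : r = if s = 0 then 0 else z - s)
    (hts : (t + s') % z = if s' = 0 then 0 else z - s') :
    z * (v / 2 * (if t = 0 then 0 else 1)) + v % 2 * t + s' =
      s + z * (if r = s then 0 else if r < s then v / 2 else (v + 1) / 2) := by
  have h1 := Nat.div_add_mod (t + s') z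
  have h2 : (t + s') / z < 2 := (Nat.div_lt_iff_lt_mul (by omega)).2 (by omega)
  rw [hts] at h1
  generalize (t + s') / z = c at h1 h2
  rcases Nat.even_or_odd' v with ⟨j, rfl | rfl⟩
  · rw [if_pos (even_two_mul j)] at hs
    rw [show 2 * j / 2 = j by omega, show (2 * j + 1) / 2 = j by omega,
      show 2 * j % 2 = 0 by omega]
    have hrt : t = 0 ↔ r = s := by
      interval_cases c <;> split_ifs at * <;> omega
    simp only [hrt, ite_self, hs]
    split_ifs <;> ring
  · have hodd : ¬ Even (2 * j + 1) := by simp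
    rw [if_neg hodd] at hs
    rw [show (2 * j + 1) / 2 = j by omega, show (2 * j + 1 + 1) / 2 = j + 1 by omega,
      show (2 * j + 1) % 2 = 1 by omega]
    generalize hzj : z * j = w
    have e1 : ∀ b : ℕ, z * (j * b) = w * b := fun b => by rw [← hzj]; ring
    rw [e1]
    interval_cases c <;> split_ifs at * <;> simp only [mul_add, hzj, mul_zero, mul_one] at * <;>
      omega

/-- The sum of two residues modulo `z` carries exactly when its residue is smaller than a summand. -/
theorem carry_identity {z x y : ℕ} (hz : 0 < z) :
    (x + y) / z = x / z + y / z + if (x + y) % z < y % z then 1 else 0 := by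
  have h1 := Nat.mod_lt x hz
  have h2 := Nat.mod_lt y hz
  rw [Nat.add_div hz, Nat.add_mod]
  congr 1
  by_cases h : z ≤ x % z + y % z
  · have h3 : (x % z + y % z) % z = x % z + y % z - z := by
      rw [Nat.mod_eq_sub_mod h, Nat.mod_eq_of_lt (by omega)]
    rw [if_pos h, if_pos (by omega)]
  · rw [if_neg h, Nat.mod_eq_of_lt (not_le.1 h), if_neg (by omega)]

/-! ### The valuation formula -/

theorem fibonomial_p_adic_valuation_pm_two_a_odd
    (p a n : ℕ) (hp : p.Prime) (hp2 : p ≠ 2) (hp5 : p ≠ 5)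
    (ha : 0 < a) (hn : 0 < n) (haodd : Odd a)
    (hmod : p % 5 = 2 ∨ p % 5 = 3)
    (r s A δ : ℕ)
    (hr : r = p ^ a * n % fibRank p)
    (hs : s = n % fibRank p)
    (hA : A = n * (p ^ a - 1) / (p ^ padicValNat p n * fibRank p))
    (hδ : δ = if r = s then 0
          else if r < s then
            padicValNat p n / 2 + padicValNat p (Nat.fib (fibRank p))
          else (padicValNat p n + 1) / 2) :
    (padicValNat p (fibBinom (p ^ a * n) n) : ℤ)
        = ((A / (p - 1) : ℕ) : ℤ) - (((a - 1) / 2 : ℕ) : ℤ) * (if s ≠ 0 then 1 else 0)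
          - padicValNat p (Nat.factorial A) + δ := by
  have hFact := Fact.mk hp
  obtain ⟨hz, hzF, hiff⟩ := fibRank_spec (Nat.succ_pos p) (dvd_fib_succ p hp hp2 hmod)
  have hzp : fibRank p ∣ p + 1 := (hiff _).1 (dvd_fib_succ p hp hp2 hmod)
  set z := fibRank p
  set e := padicValNat p (Nat.fib z)
  set v := padicValNat p n
  obtain ⟨n', hn'⟩ : p ^ v ∣ n := pow_padicValNat_dvd
  have hpv : 0 < p ^ v := pow_pos hp.pos v
  have ha2 : a % 2 = 1 := Nat.odd_iff.1 haodd
  -- The geometric sums, with a variable `P` for `p - 1` to avoid truncated subtraction.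
  obtain ⟨P, hP⟩ : ∃ P, p = P + 1 := ⟨p - 1, by have := hp.pos; omega⟩
  have hPpos : 0 < P := by have := hp.one_lt; omega
  have hgeom : ∀ k, P * ∑ i ∈ Finset.range k, p ^ i + 1 = p ^ k := by
    intro k
    induction k with
    | zero => simp
    | succ k ih =>
      rw [Finset.sum_range_succ, pow_succ]
      nth_rewrite 4 [hP]
      linear_combination ih
  set G := ∑ i ∈ Finset.range a, p ^ i
  have hga : P * G + 1 = p ^ a := hgeom a
  have hG : p ^ a - 1 = P * G := by rw [← hga, Nat.add_sub_cancel]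
  set M := n' * (P * G) with hM
  have hmn : p ^ a * n = p ^ v * M + n := by
    rw [← hga, hM]
    linear_combination P * G * hn'
  have hAM : A = M / z := by
    rw [hA, hG, ← Nat.mul_div_mul_left M z hpv, hM]
    nth_rewrite 1 [hn']
    rw [mul_assoc]
  -- Valuation of the Fibonomial coefficient in terms of floors.
  have hval : padicValNat p (fibBinom (p ^ a * n) n)
      + (e * (p ^ v * M / z) + padicValNat p (Nat.factorial (p ^ v * M / z))
        + (e * (n / z) + padicValNat p (Nat.factorial (n / z))))
      = e * (p ^ a * n / z) + padicValNat p (Nat.factorial (p ^ a * n / z)) := by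
    have hb := fibBinom_mul (p ^ v * M) n
    rw [← hmn] at hb
    have hb0 : fibBinom (p ^ a * n) n ≠ 0 := by
      intro h0
      rw [h0, zero_mul] at hb
      exact fibonorial_ne_zero _ hb.symm
    have := congrArg (padicValNat p) hb
    rwa [padicValNat.mul hb0 (mul_ne_zero (fibonorial_ne_zero _) (fibonorial_ne_zero _)),
      padicValNat.mul (fibonorial_ne_zero _) (fibonorial_ne_zero _),
      padicValNat_fibonorial hp hp2 hz hiff, padicValNat_fibonorial hp hp2 hz hiff,
      padicValNat_fibonorial hp hp2 hz hiff] at this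
  have hcarry := carry_identity (x := p ^ v * M) (y := n) hz
  rw [← hmn, ← hr, ← hs] at hcarry
  rw [padicValNat_factorial_pow_mul_div hp z M v, padicValNat_factorial_pow_mul_div hp z n a,
    ← hAM, hcarry] at hval
  -- Evaluation of the sums of floors.
  have hS1 := sum_pow_mul_div hz hzp n a
  have hS2 := sum_pow_mul_div hz hzp M v
  have hS3 := sum_pow_mul_div hz hzp n' a
  rw [ha2, one_mul, ← hs] at hS1
  rw [ha2, one_mul] at hS3
  generalize ∑ i ∈ Finset.range a, p ^ i * n / z = T at hS1 hval
  generalize ∑ i ∈ Finset.range v, p ^ i * M / z = T2 at hS2 hval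
  -- `n' * G` leaves the remainder `n' % z`, and its quotient by `z` is `A / (p - 1)`.
  have hmodW : n' * G % z = n' % z := by
    change _ = n' * G at hS3
    rw [← hS3, ← mul_add, Nat.mul_add_mod, Nat.mod_mod]
  have hQ := Nat.div_add_mod (n' * G) z
  have hAQ : A / (p - 1) = n' * G / z := by
    rw [hAM, hM, show p - 1 = P by omega, Nat.div_div_eq_div_mul,
      show n' * (P * G) = P * (n' * G) by ring, mul_comm z P, Nat.mul_div_mul_left _ _ hPpos]
  rw [hmodW] at hQ
  have hsum : M * ∑ i ∈ Finset.range v, p ^ i + n' * G = n * G := by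
    rw [← hgeom v] at hn'
    rw [hM]
    zify at hn' ⊢
    linear_combination -(G : ℤ) * hn'
  have hres := residue_identity (z := z) (v := v) (s := s) (s' := n' % z) (r := r) (t := M % z)
    (Nat.mod_lt _ hz) (Nat.mod_lt _ hz)
    (by rw [hs, ← pow_mul_mod_of_dvd_succ hz hzp n' v, ← hn'])
    (by rw [hr, pow_mul_mod_of_dvd_succ hz hzp n a, if_neg (Nat.not_even_iff_odd.2 haodd), ← hs])
    (by
      rw [← Nat.add_mod, show M + n' = p ^ a * n' by rw [← hga, hM]; ring,
        pow_mul_mod_of_dvd_succ hz hzp n' a, if_neg (Nat.not_even_iff_odd.2 haodd)])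
  have hD : T + a / 2 * (if s = 0 then 0 else 1) = T2 + n' * G / z
      + (if r = s then 0 else if r < s then v / 2 else (v + 1) / 2) := by
    refine Nat.eq_of_mul_eq_mul_left hz ?_
    change _ = n * G at hS1
    zify at *
    linear_combination hS1 - hS2 - hQ + hres - hsum
  -- In the case `r < s`, the summand `e` of `δ` is the contribution of the carry.
  have hδ' : δ = (if r = s then 0 else if r < s then v / 2 else (v + 1) / 2)
      + e * (if r < s then 1 else 0) := by
    rw [hδ]; split_ifs <;> omega
  rw [hAQ, hδ', show (a - 1) / 2 = a / 2 by omega]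
  generalize (if r = s then 0 else if r < s then v / 2 else (v + 1) / 2) = D at hD ⊢
  have hif : (if s ≠ 0 then (1 : ℤ) else 0) = ((if s = 0 then 0 else 1 : ℕ) : ℤ) := by
    by_cases h : s = 0 <;> simp [h]
  rw [hif]
  generalize (if s = 0 then 0 else 1 : ℕ) = σ at hD ⊢
  generalize (if r < s then 1 else 0 : ℕ) = κ at hval ⊢
  generalize n' * G / z = Q at hD ⊢
  clear * - hval hD
  zify at hval hD
  push_cast
  linear_combination hval + hD
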